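/- arXiv:1610.02676 — 4 statements merged into one kernel-verified Lean document; each statement's English description precedes it below -/
import Mathlib

section
/- Let H be a graph with h vertices and m edges, let G' be a k-partite (ε,p)-graph on vertex classes (U₁,…,U_k) with |U_i| = n for all i, and let G be a graph on V(G') such that for every i ≠ j with d_{G'}(U_i,U_j) > 0, the bipartite graph G[U_i,U_j] is δ-close to G'[U_i,U_j]. Suppose δ ≤ 1/(2m), ε ≤ (p^{m+1}/(32h⁴))², and n ≥ 4h^{h+3}/p^m. If G' contains a copy of H, then the number of copies of H in G is at least ((1 − δm)/2) · p^m · n^h. -/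
/-!
The proof counts partite maps. A copy of `H` in `G'` assigns to each vertex `a` of `H` a class
`U (φ a)` so that every edge of `H` goes to an `ε`-regular pair of density at least `p`. Let `X` be
the set of all maps `f` with `f a ∈ U (φ a)`, so `|X| = n ^ h`.

* Regularity gives `|e(A',B') - d |A'| |B'|| ≤ ε n²` for *all* subsets `A', B'` of a regular
  pair (`RegPair.cut_bound`). Fixing all coordinates but those of an edge `ab`, any condition which
  splits into a part not involving `a` and a part not involving `b` (`SplitsAt`) therefore becomes
  independent of the event that `f a f b` is an edge of `G'`, up to `ε |X|` (`regular_step`).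
* Adding the edges one at a time (`telescope`), at least `(∏ d_e - m ε) |X|` maps in `X` are
  homomorphisms to `G'`, and for each edge `e` at most `(δ ∏ d_e + (m - 1) ε) |X|` of these use at
  `e` an edge of `G'` missing from `G`: here the missing edges take the place of `G'` at `e`, and
  only the other `m - 1` edges are replaced by their densities.
* At most `(h² - h) |X| / n` maps in `X` are not injective (`card_collide`).

So `G` has at least `((1 - δ m) ∏ d_e - m² ε - (h² - h) / n) |X|` copies, and the two error terms
are each at most `p ^ m / 8`, while `(1 - δ m) / 2 ≥ 1 / 4`.
-/

open Finset
open scoped Classical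

/-- `eCnt G A B` is the number of ordered pairs `(u,v) ∈ A × B` with `uv` an edge of `G`. -/
noncomputable def eCnt {V : Type*} [Fintype V] (G : SimpleGraph V) (A B : Finset V) : ℕ :=
  ((A ×ˢ B).filter fun p => G.Adj p.1 p.2).card

/-- The edge density `d_G(A,B)` between vertex subsets `A` and `B`. -/
noncomputable def dens {V : Type*} [Fintype V] (G : SimpleGraph V) (A B : Finset V) : ℝ :=
  eCnt G A B / (A.card * B.card)

/-- The pair `(A,B)` is `ε`-regular. -/
def RegPair {V : Type*} [Fintype V] (G : SimpleGraph V) (ε : ℝ) (A B : Finset V) : Prop :=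
  ∀ A' ⊆ A, ∀ B' ⊆ B, ε * A.card ≤ A'.card → ε * B.card ≤ B'.card →
    |dens G A B - dens G A' B'| ≤ ε

/-- The number of pairs `(u,v) ∈ A × B` on which the bipartite graphs `G[A,B]` and
`G'[A,B]` differ, i.e. `|E_G(A,B) △ E_{G'}(A,B)|`. -/
noncomputable def bipSymmDiff {V : Type*} [Fintype V] (G G' : SimpleGraph V)
    (A B : Finset V) : ℕ :=
  ((A ×ˢ B).filter fun pq => ¬ (G.Adj pq.1 pq.2 ↔ G'.Adj pq.1 pq.2)).card

/-- The number of copies of `H` in `G`, i.e. of injective maps `V(H) → V(G)` that map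
edges of `H` to edges of `G`. -/
noncomputable def copyCount {α β : Type*} (H : SimpleGraph α) (G : SimpleGraph β) : ℕ :=
  Nat.card {f : α → β // Function.Injective f ∧ ∀ ⦃a b : α⦄, H.Adj a b → G.Adj (f a) (f b)}

/-! ### Averaging over coordinates of a product -/

/-- Resampling the coordinate `a` of a uniformly random point of a product set does not change
its distribution. -/
lemma sum_resample {α V : Type*} [Fintype α] (U : α → Finset V) (a : α) (F : (α → V) → ℝ) :
    ∑ f ∈ Fintype.piFinset U, ∑ x ∈ U a, F (Function.update f a x)
      = (U a).card * ∑ f ∈ Fintype.piFinset U, F f := by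
  have key : ∑ q ∈ Fintype.piFinset U ×ˢ U a, F (Function.update q.1 a q.2)
      = ∑ q ∈ Fintype.piFinset U ×ˢ U a, F q.1 := by
    -- swapping `f a` with the new value `x` is an involution of the pairs `(f, x)`
    have hmem : ∀ q ∈ Fintype.piFinset U ×ˢ U a,
        (Function.update q.1 a q.2, q.1 a) ∈ Fintype.piFinset U ×ˢ U a := by
      rintro ⟨f, x⟩ hq
      simp only [Finset.mem_product, Fintype.mem_piFinset] at hq ⊢
      refine ⟨fun b => ?_, hq.1 a⟩
      by_cases hb : b = a
      · subst hb; simpa using hq.2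
      · simpa [Function.update_of_ne hb] using hq.1 b
    refine Finset.sum_nbij' (fun q => (Function.update q.1 a q.2, q.1 a))
      (fun q => (Function.update q.1 a q.2, q.1 a)) hmem hmem ?_ ?_ ?_
    · rintro ⟨f, x⟩ _; simp
    · rintro ⟨f, x⟩ _; simp
    · rintro ⟨f, x⟩ _; rfl
  rw [Finset.sum_product, Finset.sum_product] at key
  rw [key, Finset.mul_sum]
  simp

lemma sum_resample_two {α V : Type*} [Fintype α] (U : α → Finset V) (a b : α)
    (F : (α → V) → ℝ) :
    ∑ f ∈ Fintype.piFinset U, ∑ x ∈ U a, ∑ y ∈ U b,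
        F (Function.update (Function.update f a x) b y)
      = (U a).card * ((U b).card * ∑ f ∈ Fintype.piFinset U, F f) := by
  rw [sum_resample U a (fun f => ∑ y ∈ U b, F (Function.update f b y)), sum_resample]

/-- Two given coordinates of a point of a product of `n`-sets agree with probability at most
`1 / n`. -/
lemma card_collide {α V : Type*} [Fintype α] (U : α → Finset V) (n : ℕ)
    (hU : ∀ a, (U a).card = n) (a b : α) (hab : a ≠ b) :
    (n : ℝ) * ((Fintype.piFinset U).filter fun f => f a = f b).card
      ≤ (Fintype.piFinset U).card := by
  have key := sum_resample U a (fun f => if f a = f b then (1 : ℝ) else 0)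
  rw [Finset.card_filter]
  push_cast
  rw [← hU a, ← key, Finset.card_eq_sum_ones]
  push_cast
  refine Finset.sum_le_sum fun f _ => ?_
  simp only [Function.update_self, Function.update_of_ne hab.symm]
  rw [Finset.sum_ite_eq']
  split_ifs <;> norm_num

/-! ### Regular pairs -/

lemma dens_mul {V : Type*} [Fintype V] (G : SimpleGraph V) (A B : Finset V) :
    dens G A B * (A.card * B.card) = eCnt G A B := by
  unfold _root_.dens
  by_cases hz : (A.card : ℝ) * B.card = 0
  · rw [hz]
    have : eCnt G A B ≤ A.card * B.card := by
      unfold eCnt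
      exact (Finset.card_filter_le _ _).trans (Finset.card_product _ _).le
    have h2 : A.card * B.card = 0 := by exact_mod_cast hz
    have : eCnt G A B = 0 := by omega
    simp [this]
  · exact div_mul_cancel₀ _ hz

lemma eCnt_le {V : Type*} [Fintype V] (G : SimpleGraph V) (A B : Finset V) :
    (eCnt G A B : ℝ) ≤ A.card * B.card := by
  unfold eCnt
  exact_mod_cast (Finset.card_filter_le _ _).trans (Finset.card_product _ _).le

lemma dens_nonneg {V : Type*} [Fintype V] (G : SimpleGraph V) (A B : Finset V) :
    0 ≤ dens G A B := by
  unfold _root_.dens; positivity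

lemma dens_le_one {V : Type*} [Fintype V] (G : SimpleGraph V) (A B : Finset V) :
    dens G A B ≤ 1 := div_le_one_of_le₀ (eCnt_le G A B) (by positivity)

/-- The discrepancy bound holds for every pair of subsets: large ones by regularity, and the
remaining ones because they span at most `ε |A| |B|` pairs altogether. -/
lemma RegPair.cut_bound {V : Type*} [Fintype V] {G : SimpleGraph V} {ε : ℝ} {A B : Finset V}
    (hε : 0 ≤ ε) (hr : RegPair G ε A B) {A' B' : Finset V} (hA : A' ⊆ A) (hB : B' ⊆ B) :
    |(eCnt G A' B' : ℝ) - dens G A B * (A'.card * B'.card)| ≤ ε * (A.card * B.card) := by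
  have hA' : (A'.card : ℝ) ≤ A.card := by exact_mod_cast Finset.card_le_card hA
  have hB' : (B'.card : ℝ) ≤ B.card := by exact_mod_cast Finset.card_le_card hB
  have a0 : (0 : ℝ) ≤ A'.card := by positivity
  have b0 : (0 : ℝ) ≤ B'.card := by positivity
  by_cases hl : ε * A.card ≤ A'.card ∧ ε * B.card ≤ B'.card
  · have h1 := hr A' hA B' hB hl.1 hl.2
    rw [← dens_mul G A' B', ← sub_mul, abs_mul, abs_sub_comm,
      abs_of_nonneg (mul_nonneg a0 b0)]
    exact mul_le_mul h1 (mul_le_mul hA' hB' b0 (a0.trans hA')) (mul_nonneg a0 b0) hε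
  · have h2 : (A'.card : ℝ) * B'.card ≤ ε * (A.card * B.card) := by
      rw [not_and_or, not_le, not_le] at hl
      rcases hl with hl | hl
      · calc (A'.card : ℝ) * B'.card ≤ (ε * A.card) * B.card :=
              mul_le_mul hl.le hB' b0 (a0.trans hl.le)
          _ = _ := by ring
      · calc (A'.card : ℝ) * B'.card ≤ A.card * (ε * B.card) :=
              mul_le_mul hA' hl.le b0 (a0.trans hA')
          _ = _ := by ring
    have h3 := eCnt_le G A' B'
    have h4 : dens G A B * (A'.card * B'.card) ≤ A'.card * B'.card :=
      mul_le_of_le_one_left (mul_nonneg a0 b0) (dens_le_one G A B)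
    have h5 : 0 ≤ dens G A B * (A'.card * B'.card) :=
      mul_nonneg (dens_nonneg G A B) (mul_nonneg a0 b0)
    have h6 : (0 : ℝ) ≤ eCnt G A' B' := by positivity
    rw [abs_le]
    constructor <;> linarith

/-! ### Replacing one edge by its density -/

/-- The condition `Q` on maps is the conjunction of a condition that ignores the value at `a`
and a condition that ignores the value at `b`. -/
def SplitsAt {α V : Type*} (a b : α) (Q : (α → V) → Prop) : Prop :=
  ∃ Q₁ Q₂ : (α → V) → Prop, (∀ f, Q f ↔ Q₁ f ∧ Q₂ f) ∧
    (∀ f x, Q₁ (Function.update f a x) ↔ Q₁ f) ∧ (∀ f y, Q₂ (Function.update f b y) ↔ Q₂ f)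

lemma SplitsAt.and {α V : Type*} {a b : α} {Q R : (α → V) → Prop}
    (hQ : SplitsAt a b Q) (hR : SplitsAt a b R) : SplitsAt a b (fun f => Q f ∧ R f) := by
  obtain ⟨Q₁, Q₂, h, h1, h2⟩ := hQ
  obtain ⟨R₁, R₂, k, k1, k2⟩ := hR
  refine ⟨fun f => Q₁ f ∧ R₁ f, fun f => Q₂ f ∧ R₂ f, fun f => ?_, fun f x => ?_, fun f y => ?_⟩
  · simp only [h, k]; tauto
  · simp only [h1, k1]
  · simp only [h2, k2]

lemma SplitsAt.forall_mem {α V ι : Type*} {a b : α} (T : Finset ι) {P : ι → (α → V) → Prop}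
    (hP : ∀ e ∈ T, SplitsAt a b (P e)) : SplitsAt a b (fun f => ∀ e ∈ T, P e f) := by
  induction T using Finset.induction_on with
  | empty => exact ⟨fun _ => True, fun _ => True, by simp⟩
  | insert e T _ ih =>
    have := (hP e (by simp)).and (ih fun e' he' => hP e' (by simp [he']))
    simpa [Finset.forall_mem_insert] using this

/-- A condition on the images of the ends of an edge `e'` other than `ab` splits at `a, b`, as
`e'` misses `a` or `b`. -/
lemma SplitsAt.of_edge {α V : Type*} {a b : α} (e' : Sym2 α) (hab : a ≠ b)
    (hne : e' ≠ s(a, b)) (C : Sym2 V → Prop) : SplitsAt a b (fun f => C (Sym2.map f e')) := by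
  have hupd : ∀ c : α, c ∉ e' → ∀ (f : α → V) x,
      Sym2.map (Function.update f c x) e' = Sym2.map f e' := by
    intro c hc f x
    refine Sym2.map_congr fun d hd => ?_
    have : d ≠ c := fun h => hc (h ▸ hd)
    simp [Function.update_of_ne this]
  by_cases ha : a ∈ e'
  · by_cases hb : b ∈ e'
    · exfalso
      exact hne ((Sym2.mem_and_mem_iff hab).1 ⟨ha, hb⟩)
    · exact ⟨fun _ => True, fun f => C (Sym2.map f e'), by simp, by simp,
        fun f y => by simp only [hupd b hb]⟩
  · exact ⟨fun f => C (Sym2.map f e'), fun _ => True, by simp,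
      fun f y => by simp only [hupd a ha], by simp⟩

/-- Over a regular pair, a condition splitting at `a, b` is nearly independent of the event that
`f a f b` is an edge. -/
lemma regular_step {α V : Type*} [Fintype α] [Fintype V] (G : SimpleGraph V) (U : α → Finset V)
    (ε : ℝ) (hε : 0 ≤ ε) (a b : α) (hab : a ≠ b) (ha : (U a).Nonempty) (hb : (U b).Nonempty)
    (hr : RegPair G ε (U a) (U b)) (Q : (α → V) → Prop) (hQ : SplitsAt a b Q) :
    |(((Fintype.piFinset U).filter fun f => Q f ∧ G.Adj (f a) (f b)).card : ℝ)
      - dens G (U a) (U b) * ((Fintype.piFinset U).filter Q).card|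
      ≤ ε * (Fintype.piFinset U).card := by
  obtain ⟨Q₁, Q₂, h, h1, h2⟩ := hQ
  set d := dens G (U a) (U b) with hd
  set X := Fintype.piFinset U
  let F : (α → V) → ℝ := fun f =>
    (if Q f ∧ G.Adj (f a) (f b) then 1 else 0) - d * (if Q f then 1 else 0)
  have hF : (((X.filter fun f => Q f ∧ G.Adj (f a) (f b)).card : ℝ)
      - d * (X.filter Q).card) = ∑ f ∈ X, F f := by
    simp only [F, Finset.sum_sub_distrib, ← Finset.mul_sum, Finset.card_filter]
    push_cast
    rfl
  rw [hF]
  have key := sum_resample_two U a b F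
  have hpa : (0 : ℝ) < (U a).card := by exact_mod_cast ha.card_pos
  have hpb : (0 : ℝ) < (U b).card := by exact_mod_cast hb.card_pos
  have hinner : ∀ f ∈ X, |∑ x ∈ U a, ∑ y ∈ U b,
      F (Function.update (Function.update f a x) b y)| ≤ ε * ((U a).card * (U b).card) := by
    intro f _
    -- with the other coordinates fixed, `Q` cuts out a rectangle `A' × B'`
    set A' := (U a).filter fun x => Q₂ (Function.update f a x) with hA'
    set B' := (U b).filter fun y => Q₁ (Function.update f b y) with hB'
    have hQ' : ∀ x y, Q (Function.update (Function.update f a x) b y) ↔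
        Q₂ (Function.update f a x) ∧ Q₁ (Function.update f b y) := by
      intro x y
      rw [h, h2, Function.update_comm hab, h1, and_comm]
    have heq : ∑ x ∈ U a, ∑ y ∈ U b, F (Function.update (Function.update f a x) b y)
        = (eCnt G A' B' : ℝ) - d * (A'.card * B'.card) := by
      have e1 : (eCnt G A' B' : ℝ) = ∑ x ∈ U a, ∑ y ∈ U b,
          if (Q₂ (Function.update f a x) ∧ Q₁ (Function.update f b y)) ∧ G.Adj x y
            then (1 : ℝ) else 0 := by
        unfold eCnt
        rw [← Finset.sum_product', ← Finset.filter_product, Finset.filter_filter,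
          Finset.card_filter]
        push_cast
        rfl
      have e2 : ((A'.card : ℝ) * B'.card) = ∑ x ∈ U a, ∑ y ∈ U b,
          if (Q₂ (Function.update f a x) ∧ Q₁ (Function.update f b y))
            then (1 : ℝ) else 0 := by
        rw [← Nat.cast_mul, ← Finset.card_product, ← Finset.sum_product',
          ← Finset.filter_product, Finset.card_filter]
        push_cast
        rfl
      rw [e1, e2]
      simp only [F, hQ', Finset.mul_sum, ← Finset.sum_sub_distrib, Function.update_self,
        Function.update_of_ne hab]
    rw [heq]
    exact hr.cut_bound hε (Finset.filter_subset _ _) (Finset.filter_subset _ _)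
  have hsum : |((U a).card : ℝ) * ((U b).card * ∑ f ∈ X, F f)|
      ≤ X.card * (ε * ((U a).card * (U b).card)) := by
    rw [← key, ← nsmul_eq_mul]
    exact (Finset.abs_sum_le_sum_abs _ _).trans (Finset.sum_le_card_nsmul _ _ _ hinner)
  rw [abs_mul, abs_mul, abs_of_pos hpa, abs_of_pos hpb] at hsum
  have hpp := mul_pos hpa hpb
  refine le_of_mul_le_mul_left ?_ hpp
  calc _ = ((U a).card : ℝ) * ((U b).card * |∑ f ∈ X, F f|) := by ring
    _ ≤ _ := hsum
    _ = _ := by ring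

/-- A condition on the values at `a` and `b` alone has the same density in the product as in
`U a × U b`. -/
lemma card_edge_filter {α V : Type*} [Fintype α] (U : α → Finset V)
    (a b : α) (hab : a ≠ b) (R : V → V → Prop) :
    ((U a).card : ℝ) * ((U b).card * ((Fintype.piFinset U).filter fun f => R (f a) (f b)).card)
      = (Fintype.piFinset U).card * ((U a ×ˢ U b).filter fun q => R q.1 q.2).card := by
  have key := sum_resample_two U a b (fun f => if R (f a) (f b) then (1 : ℝ) else 0)
  simp only [Function.update_self, Function.update_of_ne hab, Finset.sum_const,
    nsmul_eq_mul] at key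
  rw [Finset.card_filter (fun f : α → V => R (f a) (f b)),
    Finset.card_filter (fun q : V × V => R q.1 q.2), Finset.sum_product]
  push_cast
  exact key.symm

/-! ### Adding the edges one at a time -/

/-- If each condition `P e` holds with density `d e ≤ 1`, up to `c`, given `W` and any set of the
other conditions, then all of them hold together with density `∏ d e` given `W`, up to
`|S| c`. -/
lemma telescope {ι Ω : Type*} (X : Finset Ω) (W : Ω → Prop) (P : ι → Ω → Prop) (d : ι → ℝ)
    (c : ℝ) (S : Finset ι) (hd : ∀ e ∈ S, 0 ≤ d e ∧ d e ≤ 1)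
    (hstep : ∀ e ∈ S, ∀ T ⊆ S, e ∉ T →
      |((X.filter fun f => (W f ∧ ∀ e' ∈ T, P e' f) ∧ P e f).card : ℝ)
        - d e * (X.filter fun f => W f ∧ ∀ e' ∈ T, P e' f).card| ≤ c) :
    |((X.filter fun f => W f ∧ ∀ e ∈ S, P e f).card : ℝ) - (∏ e ∈ S, d e) * (X.filter W).card|
      ≤ S.card * c := by
  induction S using Finset.induction_on with
  | empty => simp
  | insert e S he ih =>
    have ih' := ih (fun e' he' => hd e' (by simp [he'])) (fun e' he' T hT hn =>
      hstep e' (by simp [he']) T (hT.trans (Finset.subset_insert _ _)) hn)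
    have h1 := hstep e (by simp) S (Finset.subset_insert _ _) he
    obtain ⟨d0, d1⟩ := hd e (by simp)
    have hset : (X.filter fun f => W f ∧ ∀ e' ∈ insert e S, P e' f)
        = X.filter fun f => (W f ∧ ∀ e' ∈ S, P e' f) ∧ P e f := by
      refine Finset.filter_congr fun f _ => ?_
      rw [Finset.forall_mem_insert]; tauto
    rw [hset, Finset.prod_insert he, Finset.card_insert_of_notMem he]
    push_cast
    set A : ℝ := ((X.filter fun f => (W f ∧ ∀ e' ∈ S, P e' f) ∧ P e f).card : ℝ)
    set B : ℝ := ((X.filter fun f => W f ∧ ∀ e' ∈ S, P e' f).card : ℝ)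
    set C : ℝ := (∏ e ∈ S, d e) * (X.filter W).card with hC
    have h2 : |d e * (B - C)| ≤ S.card * c := by
      rw [abs_mul, abs_of_nonneg d0]
      exact (mul_le_of_le_one_left (abs_nonneg _) d1).trans ih'
    calc |A - d e * (∏ e ∈ S, d e) * (X.filter W).card|
        = |(A - d e * B) + d e * (B - C)| := by rw [hC]; congr 1; ring
      _ ≤ |A - d e * B| + |d e * (B - C)| := abs_add_le _ _
      _ ≤ _ := by linarith

/-! ### Counting homomorphisms -/

/-- The number of partite homomorphisms `H → G`; `D` is the product of the densities in `G'` over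
the edges of `H`. -/
lemma partite_hom_count {α V : Type*} [Fintype α] [Fintype V] (H : SimpleGraph α)
    (G' G : SimpleGraph V) (U : α → Finset V) (ε p δ : ℝ) (hε : 0 ≤ ε) (hp : 0 < p)
    (hU : ∀ a, (U a).Nonempty)
    (hreg : ∀ a b, H.Adj a b → RegPair G' ε (U a) (U b) ∧ p ≤ dens G' (U a) (U b) ∧
      (bipSymmDiff G G' (U a) (U b) : ℝ) ≤ δ * eCnt G' (U a) (U b)) :
    ∃ D : ℝ, p ^ H.edgeFinset.card ≤ D ∧
      ((1 - δ * H.edgeFinset.card) * D - (H.edgeFinset.card : ℝ) ^ 2 * ε)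
          * (Fintype.piFinset U).card
        ≤ ((Fintype.piFinset U).filter fun f => ∀ e ∈ H.edgeFinset,
            Sym2.map f e ∈ G.edgeSet).card := by
  set X := Fintype.piFinset U with hX
  set E := H.edgeFinset with hE
  let P : Sym2 α → (α → V) → Prop := fun e f => Sym2.map f e ∈ G'.edgeSet
  obtain ⟨W, hW⟩ : ∃ W : Sym2 α → (α → V) → Prop, ∀ e f,
      W e f ↔ Sym2.map f e ∈ G'.edgeSet ∧ Sym2.map f e ∉ G.edgeSet := ⟨_, fun _ _ => Iff.rfl⟩
  -- the density at `e`, with the facts used about it; the extra condition `C` on the image of `e₀`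
  -- is vacuous or the defining condition of `W e₀` for some `e₀ ≠ e`
  have key : ∀ e : Sym2 α, ∃ d : ℝ, e ∈ E → p ≤ d ∧ d ≤ 1 ∧
      ((X.filter (W e)).card : ℝ) ≤ δ * d * X.card ∧
      ∀ (C : Sym2 V → Prop) (e₀ : Sym2 α) (T : Finset (Sym2 α)), T ⊆ E → e ∉ T →
        (e₀ = e → ∀ z, C z) →
        |((X.filter fun f => (C (Sym2.map f e₀) ∧ ∀ e' ∈ T, P e' f) ∧ P e f).card : ℝ)
          - d * (X.filter fun f => C (Sym2.map f e₀) ∧ ∀ e' ∈ T, P e' f).card| ≤ ε * X.card := by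
    intro e
    induction e using Sym2.ind with | _ a b =>
    refine ⟨dens G' (U a) (U b), fun he => ?_⟩
    have hadj : H.Adj a b := by simpa [hE] using he
    obtain ⟨hr, hpd, hs⟩ := hreg a b hadj
    refine ⟨hpd, dens_le_one _ _ _, ?_, ?_⟩
    · have hpa : (0 : ℝ) < (U a).card := by exact_mod_cast (hU a).card_pos
      have hpb : (0 : ℝ) < (U b).card := by exact_mod_cast (hU b).card_pos
      have h1 := card_edge_filter U a b hadj.ne (fun u v => G'.Adj u v ∧ ¬ G.Adj u v)
      have h2 : (((U a ×ˢ U b).filter fun q => G'.Adj q.1 q.2 ∧ ¬ G.Adj q.1 q.2).card : ℝ)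
          ≤ δ * (dens G' (U a) (U b) * ((U a).card * (U b).card)) := by
        rw [dens_mul]
        refine le_trans ?_ hs
        unfold bipSymmDiff
        exact_mod_cast Finset.card_le_card
          (Finset.monotone_filter_right _ fun q _ hq => by tauto)
      refine le_of_mul_le_mul_left ?_ (mul_pos hpa hpb)
      have h3 : X.filter (W s(a, b))
          = X.filter fun f => G'.Adj (f a) (f b) ∧ ¬ G.Adj (f a) (f b) := by
        refine Finset.filter_congr fun f _ => ?_
        simp [hW]
      have h1' : ((U a).card : ℝ) * ((U b).card * (X.filter (W s(a, b))).card)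
          = X.card * ((U a ×ˢ U b).filter fun q => G'.Adj q.1 q.2 ∧ ¬ G.Adj q.1 q.2).card := by
        rw [h3]
        convert h1
      rw [mul_assoc, h1']
      calc _ ≤ (X.card : ℝ) * (δ * (dens G' (U a) (U b) * ((U a).card * (U b).card))) := by
            gcongr
        _ = _ := by ring
    · intro C e₀ T hT heT hC
      have hsplit : SplitsAt a b (fun f : α → V => C (Sym2.map f e₀) ∧ ∀ e' ∈ T, P e' f) := by
        refine SplitsAt.and ?_ (SplitsAt.forall_mem T fun e' he' => ?_)
        · by_cases h0 : e₀ = s(a, b)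
          · exact ⟨fun _ => True, fun _ => True, by simp [hC h0]⟩
          · exact SplitsAt.of_edge e₀ hadj.ne h0 C
        · exact SplitsAt.of_edge e' hadj.ne (fun h => heT (h ▸ he')) (· ∈ G'.edgeSet)
      have := regular_step G' U ε hε a b hadj.ne (hU a) (hU b) hr _ hsplit
      simp only [P, Sym2.map_mk, SimpleGraph.mem_edgeSet]
      convert this
  choose d hd using key
  have hd0 : ∀ e ∈ E, 0 ≤ d e := fun e he => hp.le.trans (hd e he).1
  refine ⟨∏ e ∈ E, d e, ?_, ?_⟩
  · rw [← Finset.prod_const]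
    exact Finset.prod_le_prod (fun _ _ => hp.le) fun e he => (hd e he).1
  set m := E.card with hm
  set D := ∏ e ∈ E, d e with hD
  -- all homomorphisms to `G'`
  have hmain : D * X.card - m * (ε * X.card) ≤ ((X.filter fun f => ∀ e ∈ E, P e f).card : ℝ) := by
    have := telescope X (fun _ => True) P d (ε * X.card) E
      (fun e he => ⟨hd0 e he, (hd e he).2.1⟩)
      (fun e he T hT hn => by
        convert (hd e he).2.2.2 (fun _ => True) e T hT hn (fun _ _ => trivial))
    simp only [true_and, Finset.filter_true] at this
    linarith [(abs_le.1 this).1]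
  -- homomorphisms to `G'` whose image of `e` is missing from `G`
  have hbad : ∀ e ∈ E, ((X.filter fun f => W e f ∧ ∀ e' ∈ E.erase e, P e' f).card : ℝ)
      ≤ δ * D * X.card + (m - 1) * (ε * X.card) := by
    intro e he
    have hsub := Finset.erase_subset e E
    have := telescope X (W e) P d (ε * X.card) (E.erase e)
      (fun e' he' => ⟨hd0 e' (hsub he'), (hd e' (hsub he')).2.1⟩)
      (fun e' he' T hT hn => by
        simp only [hW]
        convert (hd e' (hsub he')).2.2.2 (fun z => z ∈ G'.edgeSet ∧ z ∉ G.edgeSet) e T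
          (hT.trans hsub) hn (fun h => absurd h.symm (Finset.ne_of_mem_erase he')))
    have hc : ((E.erase e).card : ℝ) = m - 1 := by
      rw [Finset.card_erase_of_mem he, Nat.cast_sub (Finset.card_pos.2 ⟨e, he⟩)]; simp [hm]
    rw [hc] at this
    have h2 := (abs_le.1 this).2
    have h1 : (∏ e' ∈ E.erase e, d e') * (X.filter (W e)).card ≤ δ * D * X.card := by
      calc _ ≤ (∏ e' ∈ E.erase e, d e') * (δ * d e * X.card) :=
            mul_le_mul_of_nonneg_left (hd e he).2.2.1
              (Finset.prod_nonneg fun e' he' => hd0 e' (hsub he'))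
        _ = δ * ((∏ e' ∈ E.erase e, d e') * d e) * X.card := by ring
        _ = _ := by rw [Finset.prod_erase_mul _ _ he]
    -- the two filters differ only in their decidability instances
    refine le_trans (le_of_eq ?_) ((sub_le_iff_le_add'.1 h2).trans (add_le_add_left h1 _))
    congr!
  have hcover : (X.filter fun f => ∀ e ∈ E, P e f) ⊆
      (X.filter fun f => ∀ e ∈ E, Sym2.map f e ∈ G.edgeSet) ∪
        E.biUnion fun e => X.filter fun f => W e f ∧ ∀ e' ∈ E.erase e, P e' f := by
    intro f hf
    rw [Finset.mem_filter] at hf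
    by_cases hg : ∀ e ∈ E, Sym2.map f e ∈ G.edgeSet
    · exact Finset.mem_union_left _ (Finset.mem_filter.2 ⟨hf.1, hg⟩)
    · push Not at hg
      obtain ⟨e, he, hne⟩ := hg
      refine Finset.mem_union_right _ (Finset.mem_biUnion.2 ⟨e, he, Finset.mem_filter.2
        ⟨hf.1, (hW e f).2 ⟨hf.2 e he, hne⟩, fun e' he' => hf.2 e' (Finset.mem_of_mem_erase he')⟩⟩)
  have hcard : ((X.filter fun f => ∀ e ∈ E, P e f).card : ℝ) ≤
      (X.filter fun f => ∀ e ∈ E, Sym2.map f e ∈ G.edgeSet).card +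
        ∑ e ∈ E, ((X.filter fun f => W e f ∧ ∀ e' ∈ E.erase e, P e' f).card : ℝ) := by
    exact_mod_cast (Finset.card_le_card hcover).trans ((Finset.card_union_le _ _).trans
      (Nat.add_le_add_left Finset.card_biUnion_le _))
  have hsum := Finset.sum_le_card_nsmul E _ _ hbad
  rw [nsmul_eq_mul, ← hm] at hsum
  linarith

lemma card_not_injective {α V : Type*} [Fintype α] (U : α → Finset V) (n : ℕ)
    (hU : ∀ a, (U a).card = n) :
    (n : ℝ) * ((Fintype.piFinset U).filter fun f => ¬ Function.Injective f).card
      ≤ ((Fintype.card α : ℝ) ^ 2 - Fintype.card α) * (Fintype.piFinset U).card := by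
  set X := Fintype.piFinset U
  have hsub : (X.filter fun f => ¬ Function.Injective f) ⊆
      (Finset.univ : Finset α).offDiag.biUnion fun q => X.filter fun f => f q.1 = f q.2 := by
    intro f hf
    rw [Finset.mem_filter] at hf
    obtain ⟨hfX, hf⟩ := hf
    simp only [Function.Injective, not_forall] at hf
    obtain ⟨a, b, hab, hne⟩ := hf
    exact Finset.mem_biUnion.2 ⟨(a, b), by simpa using hne, Finset.mem_filter.2 ⟨hfX, hab⟩⟩
  have h1 : ((X.filter fun f => ¬ Function.Injective f).card : ℝ) ≤
      ∑ q ∈ (Finset.univ : Finset α).offDiag, ((X.filter fun f => f q.1 = f q.2).card : ℝ) := by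
    exact_mod_cast (Finset.card_le_card hsub).trans Finset.card_biUnion_le
  have h2 : ((Finset.univ : Finset α).offDiag.card : ℝ)
      = (Fintype.card α : ℝ) ^ 2 - Fintype.card α := by
    rw [Finset.offDiag_card, Nat.cast_sub (Nat.le_mul_self _)]
    push_cast [Finset.card_univ]
    ring
  calc _ ≤ (n : ℝ) * _ := mul_le_mul_of_nonneg_left h1 (by positivity)
    _ = ∑ q ∈ (Finset.univ : Finset α).offDiag,
          (n : ℝ) * ((X.filter fun f => f q.1 = f q.2).card : ℝ) := Finset.mul_sum _ _ _
    _ ≤ ∑ q ∈ (Finset.univ : Finset α).offDiag, (X.card : ℝ) :=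
        Finset.sum_le_sum fun q hq => card_collide U n hU q.1 q.2 (by simpa using hq)
    _ = _ := by rw [Finset.sum_const, nsmul_eq_mul, h2]

lemma card_filter_le_copyCount {α V : Type*} [Fintype α] [Fintype V] (H : SimpleGraph α)
    (G : SimpleGraph V) (X : Finset (α → V)) :
    (X.filter fun f => ∀ e ∈ H.edgeFinset, Sym2.map f e ∈ G.edgeSet).card
      ≤ copyCount H G + (X.filter fun f => ¬ Function.Injective f).card := by
  have hc : copyCount H G = ((Finset.univ : Finset (α → V)).filter fun f =>
      Function.Injective f ∧ ∀ ⦃a b : α⦄, H.Adj a b → G.Adj (f a) (f b)).card := by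
    unfold copyCount
    rw [Nat.card_eq_fintype_card, Fintype.card_subtype]
  rw [hc]
  refine (Finset.card_le_card fun f hf => ?_).trans (Finset.card_union_le _ _)
  rw [Finset.mem_filter] at hf
  by_cases hi : Function.Injective f
  · refine Finset.mem_union_left _ (Finset.mem_filter.2 ⟨Finset.mem_univ _, hi, fun a b hab => ?_⟩)
    simpa using hf.2 s(a, b) (by simpa using hab)
  · exact Finset.mem_union_right _ (Finset.mem_filter.2 ⟨hf.1, hi⟩)

/-- All but `(h² - h) |X| / n` of the homomorphisms are copies. -/
lemma exists_hom_le_copyCount_add {α V : Type*} [Fintype α] [Fintype V] (H : SimpleGraph α)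
    (G : SimpleGraph V) (U : α → Finset V) (n : ℕ) (hU : ∀ a, (U a).card = n) :
    ∃ N : ℝ, (n : ℝ) * N
        ≤ ((Fintype.card α : ℝ) ^ 2 - Fintype.card α) * (Fintype.piFinset U).card ∧
      (((Fintype.piFinset U).filter fun f => ∀ e ∈ H.edgeFinset,
        Sym2.map f e ∈ G.edgeSet).card : ℝ) ≤ copyCount H G + N :=
  ⟨_, card_not_injective U n hU,
    by exact_mod_cast card_filter_le_copyCount H G (Fintype.piFinset U)⟩

/-- **The approximate counting lemma (Lemma 4.1).**
Let `H` have `h` vertices and `m` edges, let `G'` be a `k`-partite `(ε,p)`-graph on classes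
`(U₁,…,U_k)` each of size `n`, and let `G` be a graph on `V(G')` such that `G[U_i,U_j]` is
`δ`-close to `G'[U_i,U_j]` whenever `d_{G'}(U_i,U_j) > 0`. If `δ ≤ 1/2m`,
`ε ≤ (p^{m+1}/32h⁴)²`, `n ≥ 4h^{h+3}/p^m` and `G'` contains a copy of `H`, then `G`
contains at least `((1 − δm)/2)·p^m·n^h` copies of `H`. -/
theorem approximate_counting {α : Type*} [Fintype α] {V : Type*} [Fintype V] [DecidableEq V]
    (H : SimpleGraph α) (G' G : SimpleGraph V)
    (h m : ℕ) (hcardH : Fintype.card α = h) (hedgesH : H.edgeSet.ncard = m)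
    (k n : ℕ) (U : Fin k → Finset V)
    (hdisj : ∀ i j : Fin k, i ≠ j → Disjoint (U i) (U j))
    (hcover : ∀ v : V, ∃ i, v ∈ U i)
    (hsizes : ∀ i, (U i).card = n)
    (hmultipartite : ∀ u v, G'.Adj u v → ∃ i j : Fin k, i ≠ j ∧ u ∈ U i ∧ v ∈ U j)
    (ε p δ : ℝ) (hε : 0 < ε) (hp : 0 < p) (hδ : 0 ≤ δ)
    (hepg : ∀ i j : Fin k, i ≠ j →
      eCnt G' (U i) (U j) = 0 ∨ (RegPair G' ε (U i) (U j) ∧ p ≤ dens G' (U i) (U j)))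
    (hclose : ∀ i j : Fin k, i ≠ j → 0 < dens G' (U i) (U j) →
      (bipSymmDiff G G' (U i) (U j) : ℝ) ≤ δ * eCnt G' (U i) (U j))
    (hδm : δ ≤ 1 / (2 * m)) (hεb : ε ≤ (p ^ (m + 1) / (32 * (h : ℝ) ^ 4)) ^ 2)
    (hn : (4 : ℝ) * (h : ℝ) ^ (h + 3) / p ^ m ≤ n)
    (hcopy : 0 < copyCount H G') :
    ((1 - δ * m) / 2) * p ^ m * (n : ℝ) ^ h ≤ copyCount H G := by
  -- for `h = 0` the bound on `ε` has a zero denominator and reads `ε ≤ 0`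
  have hh : 1 ≤ h := by
    rcases Nat.eq_zero_or_pos h with rfl | h0
    · norm_num at hεb; linarith
    · exact h0
  have hhR : (1 : ℝ) ≤ h := by exact_mod_cast hh
  have hpm : 0 < p ^ m := pow_pos hp m
  have hnpos : (0 : ℝ) < n := lt_of_lt_of_le (by positivity) hn
  have hE : H.edgeFinset.card = m := by
    rw [← hedgesH, ← SimpleGraph.coe_edgeFinset, Set.ncard_coe_finset]
  -- a class `U (φ a)` for every vertex of `H`
  obtain ⟨f₀, -, hf₀⟩ : Nonempty {f : α → V // Function.Injective f ∧
      ∀ ⦃a b : α⦄, H.Adj a b → G'.Adj (f a) (f b)} := (Nat.card_pos_iff.1 hcopy).1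
  choose φ hφ using fun a => hcover (f₀ a)
  have huniq : ∀ a i, f₀ a ∈ U i → i = φ a := by
    intro a i hi
    by_contra hne
    exact Finset.disjoint_left.1 (hdisj i (φ a) hne) hi (hφ a)
  have hreg : ∀ a b, H.Adj a b → RegPair G' ε (U (φ a)) (U (φ b)) ∧
      p ≤ dens G' (U (φ a)) (U (φ b)) ∧
      (bipSymmDiff G G' (U (φ a)) (U (φ b)) : ℝ) ≤ δ * eCnt G' (U (φ a)) (U (φ b)) := by
    intro a b hab
    have hadj := hf₀ hab
    obtain ⟨i, j, hij, hi, hj⟩ := hmultipartite _ _ hadj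
    obtain rfl := huniq a i hi
    obtain rfl := huniq b j hj
    rcases hepg _ _ hij with h0 | ⟨hr, hd⟩
    · exfalso
      unfold eCnt at h0
      rw [Finset.card_eq_zero] at h0
      have : (f₀ a, f₀ b) ∈ (∅ : Finset (V × V)) := by
        rw [← h0]; simp [hi, hj, hadj]
      simp at this
    · exact ⟨hr, hd, hclose _ _ hij (hp.trans_le hd)⟩
  have hsz : ∀ a, (U (φ a)).card = n := fun a => hsizes _
  obtain ⟨D, hD, hcount⟩ := partite_hom_count H G' G (fun a => U (φ a)) ε p δ hε.le hp
    (fun a => Finset.card_pos.1 (by rw [hsz]; exact_mod_cast hnpos)) hreg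
  obtain ⟨N, hinj, hcc⟩ := exists_hom_le_copyCount_add H G (fun a => U (φ a)) n hsz
  have hXn : ((Fintype.piFinset fun a => U (φ a)).card : ℝ) = (n : ℝ) ^ h := by
    rw [Fintype.card_piFinset]
    simp [hsz, hcardH]
  rw [hE, hXn] at hcount
  rw [hE] at hD
  rw [hXn, hcardH] at hinj
  have hX0 : (0 : ℝ) < (n : ℝ) ^ h := pow_pos hnpos h
  have hδm' : δ * m ≤ 1 / 2 := by
    rcases Nat.eq_zero_or_pos m with h0 | h0
    · simp [h0]
    · have : (0 : ℝ) < m := by exact_mod_cast h0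
      calc δ * m ≤ 1 / (2 * m) * m := by gcongr
        _ = 1 / 2 := by field_simp
  -- the regularity error
  have herr : (m : ℝ) ^ 2 * ε ≤ p ^ m / 8 := by
    rcases Nat.eq_zero_or_pos m with h0 | h0
    · subst h0; norm_num
    · have hp1 : p ≤ 1 := by
        obtain ⟨e, he⟩ := Finset.card_pos.1 (hE ▸ h0)
        induction e using Sym2.ind with | _ a b =>
        exact (hreg a b (by simpa using he)).2.1.trans (dens_le_one _ _ _)
      have hmh : (m : ℝ) ≤ (h : ℝ) ^ 2 := by
        have h1 := H.card_edgeFinset_le_card_choose_two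
        have h2 := Nat.choose_le_pow (Fintype.card α) 2
        rw [hcardH] at h1 h2
        have h3 : m ≤ h ^ 2 := by
          rw [← hE]
          refine le_trans (le_of_eq ?_) (h1.trans h2)
          congr!
        exact_mod_cast h3
      have hpp : p ^ (m + 1) ≤ 1 := pow_le_one₀ hp.le hp1
      have hpp' : p ^ (m + 1) ≤ p ^ m := pow_le_pow_of_le_one hp.le hp1 (Nat.le_succ m)
      have hp0 : 0 < p ^ (m + 1) := pow_pos hp _
      have h4 : (1 : ℝ) ≤ (h : ℝ) ^ 4 := one_le_pow₀ hhR
      calc (m : ℝ) ^ 2 * ε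
          ≤ ((h : ℝ) ^ 2) ^ 2 * (p ^ (m + 1) / (32 * (h : ℝ) ^ 4)) ^ 2 := by gcongr
        _ = (p ^ (m + 1) * p ^ (m + 1)) / (1024 * (h : ℝ) ^ 4) := by field_simp; ring
        _ ≤ (1 * p ^ m) / (8 * 1) := by
            gcongr
            norm_num
        _ = p ^ m / 8 := by ring
  -- the non-injective maps
  have hN' : N ≤ p ^ m / 8 * (n : ℝ) ^ h := by
    have h1 : ((h : ℝ) ^ 2 - h) ≤ (h : ℝ) ^ (h + 3) / 2 := by
      rcases Nat.eq_or_lt_of_le hh with h1 | h2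
      · rw [← h1]; norm_num
      · have h2' : (2 : ℝ) ≤ h := by exact_mod_cast h2
        have : (h : ℝ) ^ 3 ≤ (h : ℝ) ^ (h + 3) := pow_le_pow_right₀ hhR (by omega)
        nlinarith [sq_nonneg (h : ℝ)]
    have h2 : 4 * (h : ℝ) ^ (h + 3) ≤ n * p ^ m := by
      rwa [div_le_iff₀ hpm] at hn
    refine le_of_mul_le_mul_left (hinj.trans ?_) hnpos
    calc ((h : ℝ) ^ 2 - h) * (n : ℝ) ^ h ≤ (n * p ^ m / 8) * (n : ℝ) ^ h := by
          gcongr; linarith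
      _ = _ := by ring
  have hDX : (1 - δ * m) * p ^ m ≤ (1 - δ * m) * D :=
    mul_le_mul_of_nonneg_left hD (by linarith)
  have hquart : p ^ m / 4 ≤ (1 - δ * m) / 2 * p ^ m := by
    nlinarith
  have hfin : ((1 - δ * m) / 2 * p ^ m + p ^ m / 8) * (n : ℝ) ^ h
      ≤ ((1 - δ * m) * D - (m : ℝ) ^ 2 * ε) * (n : ℝ) ^ h :=
    mul_le_mul_of_nonneg_right (by linarith) hX0.le
  linarith
end

section
/- For every integer d ≥ 200 and every even integer n with 2 ≤ n ≤ 2^{⌊d/200⌋}, there exists an (n, d, α, β)-sequence with α = √(2 ln(d)/n) and β = 1/16. -/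
open Finset

/-!
The probabilistic method, with a convenient distribution. Write `n = 2m` and fix a perfect matching
of the ground set, i.e. identify it with `Fin m × Bool`. A `d × m` Boolean matrix `M` gives `d`
equitable bipartitions: the `i`-th one puts `(k, b)` in the first part iff `M i k = b`, so that
matched elements are always separated.

Regarding the entries as signs, the intersection of a part of the `i`-th and a part of the `j`-th
bipartition has size `(m ± R) / 2`, where `R` is the inner product of rows `i` and `j`. Two elements
of distinct matching edges `k`, `l` lie on the same side of `(d ± C) / 2` bipartitions, where `C`
is the inner product of columns `k` and `l`. So it suffices to find a sign matrix with
`|R| ≤ 4αm` for all pairs of rows and `|C| ≤ d/8` for all pairs of columns.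

For a uniformly random matrix, the exponential moment of an inner product of length `N` is
`cosh(t)^N ≤ exp(N t²/2)` (`sum_exp_inner`). Chernoff's method and a union bound, carried out by
averaging one exponential potential (`exists_matrix`), give failure probability at most
`2 d² · d⁻⁸ + 2 m² · exp(-d/128) < 1`.
-/

/-- The sign `±1` encoded by a Boolean. -/
noncomputable def sgn (b : Bool) : ℝ := if b then 1 else -1

lemma sgn_mul_le (b b' : Bool) {S U : ℝ} (h : |S| ≤ U) : sgn b * sgn b' * S ≤ U := by
  have hS := abs_le.1 h
  cases b <;> cases b' <;> simp [sgn] <;> linarith [hS.1, hS.2]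

/-- Flipping coordinate `i` negates `sgn (v i) * sgn (v j)`, so averaging over the flip
turns `exp` into `cosh`. -/
lemma sum_exp_pair {ι : Type*} [Fintype ι] [DecidableEq ι] (i j : ι) (hij : i ≠ j) (t : ℝ) :
    ∑ v : ι → Bool, Real.exp (t * (sgn (v i) * sgn (v j))) =
      2 ^ Fintype.card ι * Real.cosh t := by
  have hinv : Function.Involutive (fun v : ι → Bool => Function.update v i (!(v i))) := by
    intro v
    simp
  have h1 : ∑ v : ι → Bool, Real.exp (t * (sgn (v i) * sgn (v j))) =
      ∑ v : ι → Bool, Real.exp (-(t * (sgn (v i) * sgn (v j)))) := by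
    rw [← Equiv.sum_comp hinv.toPerm]
    refine Finset.sum_congr rfl fun v _ => ?_
    congr 1
    simp only [Function.Involutive.coe_toPerm, Function.update_self,
      Function.update_of_ne hij.symm]
    cases v i <;> cases v j <;> simp [sgn]
  have h2 : ∑ v : ι → Bool, Real.exp (t * (sgn (v i) * sgn (v j))) +
      ∑ v : ι → Bool, Real.exp (-(t * (sgn (v i) * sgn (v j)))) =
      ∑ _v : ι → Bool, 2 * Real.cosh t := by
    rw [← Finset.sum_add_distrib]
    refine Finset.sum_congr rfl fun v _ => ?_
    rw [Real.cosh_eq]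
    cases v i <;> cases v j <;> simp [sgn] <;> ring
  rw [← h1] at h2
  simp only [Finset.sum_const, Finset.card_univ, Fintype.card_fun, Fintype.card_bool,
    nsmul_eq_mul, Nat.cast_pow, Nat.cast_ofNat] at h2
  linarith

/-- Exponential moment of the inner product of two distinct columns of a sign matrix. -/
lemma sum_exp_inner {d m : ℕ} (k l : Fin m) (hkl : k ≠ l) (t : ℝ) :
    ∑ M : Fin d → Fin m → Bool, Real.exp (t * ∑ i, sgn (M i k) * sgn (M i l)) ≤
      2 ^ (d * m) * Real.exp (d * t ^ 2 / 2) := by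
  have h := Fintype.sum_pow (fun v : Fin m → Bool => Real.exp (t * (sgn (v k) * sgn (v l)))) d
  rw [sum_exp_pair k l hkl] at h
  simp only [← Real.exp_sum, ← Finset.mul_sum] at h
  rw [← h, mul_pow, ← pow_mul, Fintype.card_fin, mul_comm m d]
  gcongr
  calc Real.cosh t ^ d ≤ Real.exp (t ^ 2 / 2) ^ d := by
        gcongr
        exact Real.cosh_le_exp_half_sq t
    _ = Real.exp (d * t ^ 2 / 2) := by
        rw [← Real.exp_nat_mul]
        congr 1
        ring

lemma sum_exp_inner_rows {d m : ℕ} (i j : Fin d) (hij : i ≠ j) (t : ℝ) :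
    ∑ M : Fin d → Fin m → Bool, Real.exp (t * ∑ k, sgn (M i k) * sgn (M j k)) ≤
      2 ^ (d * m) * Real.exp (m * t ^ 2 / 2) := by
  rw [← Equiv.sum_comp (Equiv.piComm fun (_ : Fin m) (_ : Fin d) => Bool), mul_comm d m]
  exact sum_exp_inner (d := m) i j hij t

/-- If the Chernoff bounds for rows and columns add up to less than one, some sign matrix has all
inner products of distinct rows bounded by `T` and of distinct columns bounded by `U`. -/
lemma exists_matrix {d m : ℕ} (a b T U : ℝ) (ha : 0 < a) (hb : 0 < b)
    (h : (d : ℝ) ^ 2 * (2 * Real.exp (m * a ^ 2 / 2 - a * T)) +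
      (m : ℝ) ^ 2 * (2 * Real.exp (d * b ^ 2 / 2 - b * U)) < 1) :
    ∃ M : Fin d → Fin m → Bool,
      (∀ i j, i ≠ j → |∑ k, sgn (M i k) * sgn (M j k)| ≤ T) ∧
      (∀ k l, k ≠ l → |∑ i, sgn (M i k) * sgn (M i l)| ≤ U) := by
  -- `pot c V S` exceeds one as soon as `|S| > V`
  let pot : ℝ → ℝ → ℝ → ℝ := fun c V S =>
    Real.exp (-(c * V)) * (Real.exp (c * S) + Real.exp (-c * S))
  have pot_nonneg : ∀ c V S, 0 ≤ pot c V S := fun c V S => by positivity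
  have pot_lt : ∀ c V S, 0 < c → pot c V S < 1 → |S| ≤ V := by
    intro c V S hc hp
    by_contra! hV
    have hle : 1 ≤ pot c V S := by
      simp only [pot, mul_add, ← Real.exp_add]
      rcases lt_abs.1 hV with h' | h'
      · have : 1 ≤ Real.exp (-(c * V) + c * S) := Real.one_le_exp (by nlinarith)
        have := Real.exp_pos (-(c * V) + -c * S)
        linarith
      · have : 1 ≤ Real.exp (-(c * V) + -c * S) := Real.one_le_exp (by nlinarith)
        have := Real.exp_pos (-(c * V) + c * S)
        linarith
    linarith
  have hrow : ∀ p ∈ (univ : Finset (Fin d)).offDiag,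
      ∑ M : Fin d → Fin m → Bool, pot a T (∑ k, sgn (M p.1 k) * sgn (M p.2 k)) ≤
        2 ^ (d * m) * (2 * Real.exp (m * a ^ 2 / 2 - a * T)) := by
    intro p hp
    have hne := (Finset.mem_offDiag.1 hp).2.2
    have h1 := sum_exp_inner_rows (m := m) p.1 p.2 hne a
    have h2 := sum_exp_inner_rows (m := m) p.1 p.2 hne (-a)
    rw [neg_sq] at h2
    simp only [pot]
    rw [← Finset.mul_sum, Finset.sum_add_distrib, sub_eq_add_neg, Real.exp_add]
    have := mul_le_mul_of_nonneg_left (add_le_add h1 h2) (Real.exp_pos (-(a * T))).le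
    linarith
  have hcol : ∀ p ∈ (univ : Finset (Fin m)).offDiag,
      ∑ M : Fin d → Fin m → Bool, pot b U (∑ i, sgn (M i p.1) * sgn (M i p.2)) ≤
        2 ^ (d * m) * (2 * Real.exp (d * b ^ 2 / 2 - b * U)) := by
    intro p hp
    have hne := (Finset.mem_offDiag.1 hp).2.2
    have h1 := sum_exp_inner (d := d) p.1 p.2 hne b
    have h2 := sum_exp_inner (d := d) p.1 p.2 hne (-b)
    rw [neg_sq] at h2
    simp only [pot]
    rw [← Finset.mul_sum, Finset.sum_add_distrib, sub_eq_add_neg, Real.exp_add]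
    have := mul_le_mul_of_nonneg_left (add_le_add h1 h2) (Real.exp_pos (-(b * U))).le
    linarith
  have hoff : ∀ N : ℕ, (((univ : Finset (Fin N)).offDiag.card : ℕ) : ℝ) ≤ (N : ℝ) ^ 2 := by
    intro N
    rw [Finset.offDiag_card, Finset.card_fin, sq]
    exact_mod_cast Nat.sub_le _ _
  have htot : ∑ M : Fin d → Fin m → Bool,
      (∑ p ∈ (univ : Finset (Fin d)).offDiag, pot a T (∑ k, sgn (M p.1 k) * sgn (M p.2 k)) +
        ∑ p ∈ (univ : Finset (Fin m)).offDiag, pot b U (∑ i, sgn (M i p.1) * sgn (M i p.2))) <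
      ∑ _M : Fin d → Fin m → Bool, (1 : ℝ) := by
    rw [Finset.sum_add_distrib, Finset.sum_comm, Finset.sum_comm (t := univ.offDiag)]
    have e1 := Finset.sum_le_card_nsmul _ _ _ hrow
    have e2 := Finset.sum_le_card_nsmul _ _ _ hcol
    rw [nsmul_eq_mul] at e1 e2
    have f1 := mul_le_mul_of_nonneg_right (hoff d)
      (show 0 ≤ (2 : ℝ) ^ (d * m) * (2 * Real.exp (m * a ^ 2 / 2 - a * T)) by positivity)
    have f2 := mul_le_mul_of_nonneg_right (hoff m)
      (show 0 ≤ (2 : ℝ) ^ (d * m) * (2 * Real.exp (d * b ^ 2 / 2 - b * U)) by positivity)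
    have f3 := mul_lt_mul_of_pos_left h (show 0 < (2 : ℝ) ^ (d * m) by positivity)
    have hc : ∑ _M : Fin d → Fin m → Bool, (1 : ℝ) = 2 ^ (d * m) := by
      simp [← pow_mul, mul_comm]
    rw [hc]
    linarith
  obtain ⟨M, -, hM⟩ := Finset.exists_lt_of_sum_lt htot
  have n1 : ∀ p ∈ (univ : Finset (Fin d)).offDiag,
      0 ≤ pot a T (∑ k, sgn (M p.1 k) * sgn (M p.2 k)) := fun p _ => pot_nonneg _ _ _
  have n2 : ∀ p ∈ (univ : Finset (Fin m)).offDiag,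
      0 ≤ pot b U (∑ i, sgn (M i p.1) * sgn (M i p.2)) := fun p _ => pot_nonneg _ _ _
  have s1 := Finset.sum_nonneg n1
  have s2 := Finset.sum_nonneg n2
  refine ⟨M, fun i j hij => pot_lt a _ _ ha ?_, fun k l hkl => pot_lt b _ _ hb ?_⟩
  · have := Finset.single_le_sum n1 (a := (i, j)) (by simpa using hij)
    linarith
  · have := Finset.single_le_sum n2 (a := (k, l)) (by simpa using hkl)
    linarith

/-- The part with label `c` of the bipartition of `Fin n ≃ Fin m × Bool` given by a row `r`: an
element `(k, b)` lies in the part `true` iff `r k = b`. -/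
def part {n m : ℕ} (e : Fin n ≃ Fin m × Bool) (r : Fin m → Bool) (c : Bool) : Finset (Fin n) :=
  univ.filter fun x => (r (e x).1 == (e x).2) = c

lemma mem_part {n m : ℕ} (e : Fin n ≃ Fin m × Bool) (r : Fin m → Bool) (c : Bool) (x : Fin n) :
    x ∈ part e r c ↔ (r (e x).1 == (e x).2) = c := by
  simp [part]

lemma card_part_inter {n m : ℕ} (e : Fin n ≃ Fin m × Bool) (r s : Fin m → Bool) (c c' : Bool) :
    ((part e r c ∩ part e s c').card : ℝ) =
      (m + sgn c * sgn c' * ∑ k, sgn (r k) * sgn (s k)) / 2 := by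
  have h1 : part e r c ∩ part e s c' = univ.filter fun x =>
      (r (e x).1 == (e x).2) = c ∧ (s (e x).1 == (e x).2) = c' := by
    ext x
    simp [part]
  have hm : (m : ℝ) = ∑ _k : Fin m, (1 : ℝ) := by simp
  rw [h1, Finset.card_filter, Nat.cast_sum,
    Equiv.sum_comp e (fun p => ((if (r p.1 == p.2) = c ∧ (s p.1 == p.2) = c' then 1 else 0 : ℕ) : ℝ)),
    Fintype.sum_prod_type, hm, Finset.mul_sum, ← Finset.sum_add_distrib, Finset.sum_div]
  refine Finset.sum_congr rfl fun k _ => ?_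
  rw [Fintype.sum_bool]
  cases r k <;> cases s k <;> cases c <;> cases c' <;> norm_num [sgn]

lemma card_part {n m : ℕ} (e : Fin n ≃ Fin m × Bool) (r : Fin m → Bool) (c : Bool) :
    (part e r c).card = m := by
  have h := card_part_inter e r r c c
  have hs : ∀ b, sgn b * sgn b = 1 := by intro b; cases b <;> simp [sgn]
  simp only [Finset.inter_self, hs] at h
  simp only [Finset.sum_const, Finset.card_univ, Fintype.card_fin, nsmul_eq_mul] at h
  have : ((part e r c).card : ℝ) = m := by rw [h]; ring
  exact_mod_cast this

/-- Two distinct elements are separated by every bipartition if they are matched, and otherwise lie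
on the same side as often as their columns agree (or disagree). -/
lemma card_same_side {n m d : ℕ} (e : Fin n ≃ Fin m × Bool) (M : Fin d → Fin m → Bool)
    (x y : Fin n) (hxy : x ≠ y) (U : ℝ) (hU : 0 ≤ U)
    (hM : ∀ k l, k ≠ l → |∑ i, sgn (M i k) * sgn (M i l)| ≤ U) :
    (((univ : Finset (Fin d)).filter fun i =>
      (x ∈ part e (M i) true ∧ y ∈ part e (M i) true) ∨
      (x ∈ part e (M i) false ∧ y ∈ part e (M i) false)).card : ℝ) ≤ (d + U) / 2 := by
  simp only [mem_part]
  rcases hx : e x with ⟨k, b⟩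
  rcases hy : e y with ⟨l, b'⟩
  dsimp only
  have hd : (d : ℝ) = ∑ _i : Fin d, (1 : ℝ) := by simp
  by_cases hkl : k = l
  · subst hkl
    have hb : b ≠ b' := by
      rintro rfl
      exact hxy (e.injective (hx.trans hy.symm))
    rw [Finset.filter_false_of_mem]
    · simp only [Finset.card_empty, Nat.cast_zero]
      positivity
    · intro i _
      revert hb
      cases M i k <;> cases b <;> cases b' <;> simp
  · have key : (((univ : Finset (Fin d)).filter fun i =>
        ((M i k == b) = true ∧ (M i l == b') = true) ∨
        ((M i k == b) = false ∧ (M i l == b') = false)).card : ℝ) =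
        (d + sgn b * sgn b' * ∑ i, sgn (M i k) * sgn (M i l)) / 2 := by
      rw [Finset.card_filter, Nat.cast_sum, hd, Finset.mul_sum, ← Finset.sum_add_distrib,
        Finset.sum_div]
      refine Finset.sum_congr rfl fun i _ => ?_
      cases M i k <;> cases M i l <;> cases b <;> cases b' <;> norm_num [sgn]
    have := sgn_mul_le b b' (hM k l hkl)
    rw [key]
    linarith

lemma column_bound {d n : ℕ} (hnd : n ≤ 2 ^ (d / 200)) :
    (n : ℝ) ^ 2 ≤ Real.exp (d / 128) := by
  have h1 : (n : ℝ) ≤ 2 ^ (d / 200) := by exact_mod_cast hnd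
  have h2 : ((d / 200 : ℕ) : ℝ) ≤ d / 200 := by exact_mod_cast Nat.cast_div_le (m := d) (n := 200)
  have h3 : (2 : ℝ) ^ (d / 200) = Real.exp ((d / 200 : ℕ) * Real.log 2) := by
    rw [Real.exp_nat_mul, Real.exp_log two_pos]
  have hd0 : (0 : ℝ) ≤ d := Nat.cast_nonneg d
  calc (n : ℝ) ^ 2 ≤ (2 ^ (d / 200)) ^ 2 := by gcongr
    _ = Real.exp (2 * ((d / 200 : ℕ) * Real.log 2)) := by
        rw [h3, ← Real.exp_nat_mul]
        norm_num
    _ ≤ Real.exp (d / 128) := by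
        apply Real.exp_le_exp.2
        have hl := Real.log_two_lt_d9
        have hl0 := Real.log_two_gt_d9
        nlinarith

/-- **Existence of orthogonal balanced sequences of bipartitions (Lemma 5.2).**
For every `d ≥ 200` and every even `2 ≤ n ≤ 2^{⌊d/200⌋}`, there is a sequence of `d`
equitable bipartitions of an `n`-element set that is `α`-orthogonal with
`α = √(2 ln(d)/n)` and `β`-balanced with `β = 1/16`. -/
theorem balanced_sequence_exists (d n : ℕ) (hd : 200 ≤ d) (hn2 : 2 ≤ n) (hne : Even n)
    (hnd : n ≤ 2 ^ (d / 200)) :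
    ∃ B : Fin d → Finset (Fin n) × Finset (Fin n),
      (∀ i, Disjoint (B i).1 (B i).2 ∧ (B i).1 ∪ (B i).2 = univ ∧
        (B i).1.card = n / 2 ∧ (B i).2.card = n / 2) ∧
      (∀ i j : Fin d, i < j → ∀ C C' : Finset (Fin n),
        (C = (B i).1 ∨ C = (B i).2) → (C' = (B j).1 ∨ C' = (B j).2) →
        ((C ∩ C').card : ℝ) ≤ (1 / 4 + Real.sqrt (2 * Real.log d / n)) * n) ∧
      (∀ x y : Fin n, x ≠ y →
        (((univ : Finset (Fin d)).filter fun i =>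
            (x ∈ (B i).1 ∧ y ∈ (B i).1) ∨ (x ∈ (B i).2 ∧ y ∈ (B i).2)).card : ℝ) ≤
          (1 / 2 + 1 / 16) * d) := by
  obtain ⟨m, hm⟩ := hne
  have hmpos : (0 : ℝ) < m := by
    have : 0 < m := by omega
    exact_mod_cast this
  have hnm : (n : ℝ) = 2 * m := by rw [hm]; push_cast; ring
  have hdR : (200 : ℝ) ≤ d := by exact_mod_cast hd
  have hlog : 0 < Real.log d := Real.log_pos (by linarith)
  set α := Real.sqrt (2 * Real.log d / n) with hα
  have hα0 : 0 < α := Real.sqrt_pos.2 (by rw [hnm]; positivity)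
  have hα2 : α ^ 2 * m = Real.log d := by
    rw [hα, Real.sq_sqrt (by rw [hnm]; positivity), hnm]
    field_simp
  have hrow : (d : ℝ) ^ 2 * (2 * Real.exp (m * (4 * α) ^ 2 / 2 - 4 * α * (4 * α * m))) < 1 / 2 := by
    have h1 : (m : ℝ) * (4 * α) ^ 2 / 2 - 4 * α * (4 * α * m) = -((8 : ℕ) * Real.log d) := by
      rw [← hα2]; push_cast; ring
    rw [h1, Real.exp_neg, Real.exp_nat_mul, Real.exp_log (by linarith)]
    have h6 : (200 : ℝ) ^ 6 ≤ (d : ℝ) ^ 6 := by gcongr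
    have h2 : (d : ℝ) ^ 2 * (2 * ((d : ℝ) ^ 8)⁻¹) = 2 / (d : ℝ) ^ 6 := by
      have : (d : ℝ) ≠ 0 := by linarith
      field_simp
    rw [h2, div_lt_iff₀ (by positivity)]
    norm_num at h6
    linarith
  have hcol : (m : ℝ) ^ 2 * (2 * Real.exp (d * (1 / 8) ^ 2 / 2 - 1 / 8 * (d / 8))) ≤ 1 / 2 := by
    have h1 : (d : ℝ) * (1 / 8) ^ 2 / 2 - 1 / 8 * (d / 8) = -(d / 128) := by ring
    have h2 := column_bound hnd
    rw [hnm] at h2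
    rw [h1, Real.exp_neg]
    have hp := Real.exp_pos ((d : ℝ) / 128)
    rw [← mul_assoc, ← div_eq_mul_inv, div_le_iff₀ hp]
    nlinarith
  obtain ⟨M, hR, hC⟩ := exists_matrix (d := d) (m := m) (4 * α) (1 / 8) (4 * α * m) (d / 8)
    (by positivity) (by norm_num) (by linarith)
  have e : Fin n ≃ Fin m × Bool := Fintype.equivOfCardEq (by simp; omega)
  refine ⟨fun i => (part e (M i) true, part e (M i) false), fun i => ⟨?_, ?_, ?_, ?_⟩, ?_, ?_⟩
  · rw [Finset.disjoint_left]
    intro x hx hx'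
    rw [mem_part] at hx hx'
    simp [hx] at hx'
  · ext x
    simp only [Finset.mem_union, mem_part, Finset.mem_univ, iff_true]
    cases (M i (e x).1 == (e x).2) <;> simp
  · simp only [card_part]; omega
  · simp only [card_part]; omega
  · intro i j hij C C' hCi hCj
    have key : ∀ c c', ((part e (M i) c ∩ part e (M j) c').card : ℝ) ≤ (1 / 4 + α) * n := by
      intro c c'
      have := sgn_mul_le c c' (hR i j hij.ne)
      rw [card_part_inter, hnm]
      linarith
    rcases hCi with rfl | rfl <;> rcases hCj with rfl | rfl <;> exact key _ _
  · intro x y hxy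
    have := card_same_side e M x y hxy (d / 8) (by positivity) hC
    refine this.trans ?_
    linarith
end

section
/- Let Z be an ε-regular partition of a graph G (in the not-necessarily-equitable sense), and let X be any partition of V(G) of order k. Then the common refinement Z ∩ X = { Z ∩ X : Z ∈ Z, X ∈ X } is a √(8kε)-regular partition of G. -/
/-!
Put `δ = √(8kε)`; only `δ < 1` needs an argument, since the total weight of all pairs is `n²`.
Weights of families of pairs of parts are counted as numbers of vertex pairs `(u, v)`
(`sum_weight_eq_card`), which makes the common refinement easy to handle: the part of `u` in
`Z ⊓ X` is the intersection of its parts in `Z` and in `X`.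

Call a vertex `u` *small* if its part `W` in the refinement has `|W| < (δ / 8k) |A|`, where `A` is
its part in `Z`. Each of the at most `k` pieces of `A` contributes at most `(δ / 8k) |A|` small
vertices, so there are at most `(δ / 8) n` of them (`card_small_le`). If neither `u` nor `v` is
small and their parts in `Z` form an `ε`-regular pair, then a `δ`-fraction of a refined part is
still an `ε`-fraction of the part in `Z`, because `δ · δ / 8k = ε`; hence the refined pair is
`2ε`-regular with respect to such subsets, and `2ε ≤ δ` (`RegPair.subpair`). The irregular weight
of the refinement is therefore at most `ε n² + 2 (δ / 8) n² ≤ δ n²`.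
-/

open Finset
open scoped Classical

/-- A (not necessarily equitable) vertex partition `P` is `ε`-regular if the sum of
`|Z||Z'|` over ordered pairs of parts `(Z,Z')` that are not `ε`-regular is at most `ε n²`. -/
def IsRegularPartitionW {V : Type*} [Fintype V] [DecidableEq V] (G : SimpleGraph V)
    (ε : ℝ) (P : Finpartition (univ : Finset V)) : Prop :=
  ∑ pq ∈ (P.parts ×ˢ P.parts).filter (fun pq => ¬ RegPair G ε pq.1 pq.2),
      ((pq.1.card : ℝ) * pq.2.card) ≤ ε * (Fintype.card V : ℝ) ^ 2

/-- Large subpairs inherit regularity: if every `δ`-fraction of `C` (resp. `D`) is an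
`ε`-fraction of `A` (resp. `B`), both densities are within `ε` of `d(A, B)`. -/
lemma RegPair.subpair {V : Type*} [Fintype V] {G : SimpleGraph V} {ε δ : ℝ} {A B C D : Finset V}
    (h : RegPair G ε A B) (hCA : C ⊆ A) (hDB : D ⊆ B) (hδ : δ ≤ 1) (hεδ : 2 * ε ≤ δ)
    (hC : ε * A.card ≤ δ * C.card) (hD : ε * B.card ≤ δ * D.card) : RegPair G δ C D := by
  intro C' hC' D' hD' hcC hcD
  have h1 := h C hCA D hDB
    (hC.trans (mul_le_of_le_one_left (Nat.cast_nonneg _) hδ))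
    (hD.trans (mul_le_of_le_one_left (Nat.cast_nonneg _) hδ))
  have h2 := h C' (hC'.trans hCA) D' (hD'.trans hDB) (hC.trans hcC) (hD.trans hcD)
  rw [abs_le] at h1 h2 ⊢
  constructor <;> linarith [h1.1, h1.2, h2.1, h2.2]

/-- The weight of a family of pairs of parts is the number of ordered vertex pairs whose parts
form a pair in the family. -/
lemma sum_weight_eq_card {V : Type*} [Fintype V] [DecidableEq V]
    (P : Finpartition (univ : Finset V)) (Q : Finset V → Finset V → Prop) :
    ∑ pq ∈ (P.parts ×ˢ P.parts).filter (fun pq => Q pq.1 pq.2), ((pq.1.card : ℝ) * pq.2.card)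
      = (((univ : Finset (V × V)).filter fun uv => Q (P.part uv.1) (P.part uv.2)).card : ℝ) := by
  rw [card_eq_sum_card_fiberwise (f := fun uv : V × V => (P.part uv.1, P.part uv.2))
    (t := (P.parts ×ˢ P.parts).filter (fun pq => Q pq.1 pq.2))]
  · push_cast
    refine sum_congr rfl ?_
    rintro ⟨p, q⟩ hpq
    simp only [mem_filter, mem_product] at hpq
    rw [← Nat.cast_mul, ← card_product]
    congr 2
    ext ⟨u, v⟩
    simp only [mem_product, mem_filter, mem_univ, true_and, Prod.mk.injEq]
    constructor
    · rintro ⟨hu, hv⟩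
      have e1 := P.part_eq_of_mem hpq.1.1 hu
      have e2 := P.part_eq_of_mem hpq.1.2 hv
      exact ⟨by rw [e1, e2]; exact hpq.2, e1, e2⟩
    · rintro ⟨-, e1, e2⟩
      exact ⟨e1 ▸ P.mem_part (mem_univ u), e2 ▸ P.mem_part (mem_univ v)⟩
  · rintro ⟨u, v⟩ huv
    simp only [coe_filter, Set.mem_ofPred_eq, mem_univ, true_and, mem_product] at huv ⊢
    exact ⟨⟨P.part_mem.2 (mem_univ u), P.part_mem.2 (mem_univ v)⟩, huv⟩

lemma isRegularPartitionW_iff {V : Type*} [Fintype V] [DecidableEq V] (G : SimpleGraph V)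
    (ε : ℝ) (P : Finpartition (univ : Finset V)) :
    IsRegularPartitionW G ε P ↔
      (((univ : Finset (V × V)).filter fun uv =>
        ¬ RegPair G ε (P.part uv.1) (P.part uv.2)).card : ℝ) ≤ ε * (Fintype.card V : ℝ) ^ 2 := by
  have h := sum_weight_eq_card P (fun p q => ¬ RegPair G ε p q)
  unfold IsRegularPartitionW
  -- The statement and `h` differ only in the decidability instances of the filters.
  convert Iff.of_eq (congrArg (· ≤ ε * (Fintype.card V : ℝ) ^ 2) h)

lemma part_inf_eq {V : Type*} [Fintype V] [DecidableEq V]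
    (Z X : Finpartition (univ : Finset V)) (u : V) :
    (Z ⊓ X).part u = Z.part u ∩ X.part u := by
  have hu : u ∈ Z.part u ∩ X.part u :=
    mem_inter.2 ⟨Z.mem_part (mem_univ u), X.mem_part (mem_univ u)⟩
  refine (Z ⊓ X).part_eq_of_mem ?_ hu
  rw [Finpartition.parts_inf, mem_erase]
  refine ⟨?_, mem_image.2 ⟨(Z.part u, X.part u), ?_, rfl⟩⟩
  · rintro h
    simp only [bot_eq_empty] at h
    rw [h] at hu
    simp at hu
  · exact mem_product.2 ⟨Z.part_mem.2 (mem_univ u), X.part_mem.2 (mem_univ u)⟩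

/-- Few vertices lie in a piece `A ∩ B` (with `A ∈ Z`, `B ∈ X`) of relative size below `c`
in `A`. -/
lemma card_small_le {V : Type*} [Fintype V] [DecidableEq V]
    (Z X : Finpartition (univ : Finset V)) {c : ℝ} (hc : 0 ≤ c) :
    (((univ : Finset V).filter fun u =>
      ((Z.part u ∩ X.part u).card : ℝ) < c * (Z.part u).card).card : ℝ)
      ≤ X.parts.card * c * Fintype.card V := by
  rw [card_eq_sum_card_fiberwise (f := fun u : V => (Z.part u, X.part u))
    (t := Z.parts ×ˢ X.parts)]
  · push_cast
    have hn : ∑ A ∈ Z.parts, (A.card : ℝ) = Fintype.card V := by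
      rw [← Nat.cast_sum, Z.sum_card_parts, card_univ]
    calc _ ≤ ∑ p ∈ Z.parts ×ˢ X.parts, c * (p.1.card : ℝ) := by
          refine sum_le_sum ?_
          rintro ⟨A, B⟩ -
          set S := (univ.filter fun u =>
            ((Z.part u ∩ X.part u).card : ℝ) < c * (Z.part u).card).filter
              (fun u => (Z.part u, X.part u) = (A, B)) with hS
          rcases S.eq_empty_or_nonempty with h | ⟨u, hu⟩
          · rw [h]
            simp only [card_empty, Nat.cast_zero]
            positivity
          · have hsub : S ⊆ A ∩ B := by
              intro w hw
              simp only [hS, mem_filter, Prod.mk.injEq] at hw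
              rw [← hw.2.1, ← hw.2.2]
              exact mem_inter.2 ⟨Z.mem_part (mem_univ w), X.mem_part (mem_univ w)⟩
            simp only [hS, mem_filter, Prod.mk.injEq] at hu
            have h1 := hu.1.2
            rw [hu.2.1, hu.2.2] at h1
            exact (Nat.cast_le.2 (card_le_card hsub)).trans h1.le
      _ = X.parts.card * c * Fintype.card V := by
          rw [sum_product]
          simp only [sum_const, nsmul_eq_mul]
          rw [← mul_sum, ← mul_sum, hn]
          ring
  · intro u _
    simp only [coe_product, Set.mem_prod, mem_coe]
    exact ⟨Z.part_mem.2 (mem_univ u), X.part_mem.2 (mem_univ u)⟩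

/-- **Regularity of the common refinement (Claim 5.5).**
If `Z` is an `ε`-regular partition of `G` and `X` is any partition of `V(G)` of order `k`,
then the common refinement `Z ⊓ X` is a `√(8kε)`-regular partition of `G`. -/
theorem common_refinement_regular {V : Type*} [Fintype V] [DecidableEq V] (G : SimpleGraph V)
    (ε : ℝ) (Z X : Finpartition (univ : Finset V)) (k : ℕ) (hk : X.parts.card = k)
    (hZ : IsRegularPartitionW G ε Z) :
    IsRegularPartitionW G (Real.sqrt (8 * k * ε)) (Z ⊓ X) := by
  rw [isRegularPartitionW_iff] at hZ ⊢
  set δ := Real.sqrt (8 * k * ε) with hδ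
  set n : ℝ := (Fintype.card V : ℝ) with hn
  have hδ0 : 0 ≤ δ := Real.sqrt_nonneg _
  rcases isEmpty_or_nonempty V with hV | ⟨⟨v₀⟩⟩
  · rw [filter_eq_empty_iff.2 (fun uv => (hV.false uv.1).elim)]
    simp only [card_empty, Nat.cast_zero]
    positivity
  have hn0 : 0 < n := by
    have : Nonempty V := ⟨v₀⟩
    rw [hn]
    exact_mod_cast Fintype.card_pos (α := V)
  have hε : 0 ≤ ε := by
    by_contra! h
    have h1 : ε * n ^ 2 < 0 := mul_neg_of_neg_of_pos h (by positivity)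
    exact absurd (hZ.trans_lt h1) (not_lt.2 (Nat.cast_nonneg _))
  have hk1 : (1 : ℝ) ≤ k := by
    have : 0 < X.parts.card := card_pos.2 ⟨_, X.part_mem.2 (mem_univ v₀)⟩
    rw [hk] at this
    exact_mod_cast this
  have hsq : δ ^ 2 = 8 * k * ε := Real.sq_sqrt (by positivity)
  rcases le_or_gt 1 δ with h1 | h1
  · have h2 : (((univ : Finset (V × V)).filter fun uv =>
        ¬ RegPair G δ ((Z ⊓ X).part uv.1) ((Z ⊓ X).part uv.2)).card : ℝ) ≤ n ^ 2 := by
      have := card_filter_le (univ : Finset (V × V)) fun uv =>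
        ¬ RegPair G δ ((Z ⊓ X).part uv.1) ((Z ⊓ X).part uv.2)
      rw [card_univ, Fintype.card_prod, ← sq] at this
      rw [hn]
      exact_mod_cast this
    exact h2.trans (le_mul_of_one_le_left (by positivity) h1)
  have h8 : 8 * ε ≤ δ ^ 2 := by nlinarith
  have hεδ : 8 * ε ≤ δ := by nlinarith
  set c : ℝ := δ / (8 * k) with hc
  have hc0 : 0 ≤ c := by positivity
  have hδc : δ * c = ε := by
    rw [hc, mul_div_assoc', ← sq, hsq]
    field_simp
  set S := (univ : Finset V).filter fun u =>
      ((Z.part u ∩ X.part u).card : ℝ) < c * (Z.part u).card with hS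
  have hScard : (S.card : ℝ) ≤ δ / 8 * n := by
    have := card_small_le Z X hc0
    rw [hk] at this
    have e : (k : ℝ) * c = δ / 8 := by rw [hc]; field_simp
    rwa [e] at this
  have hlarge : ∀ u, u ∉ S → ε * (Z.part u).card ≤ δ * (Z.part u ∩ X.part u).card := by
    intro u hu
    simp only [hS, mem_filter, mem_univ, true_and, not_lt] at hu
    rw [← hδc, mul_assoc]
    exact mul_le_mul_of_nonneg_left hu hδ0
  have hsub : ((univ : Finset (V × V)).filter fun uv =>
        ¬ RegPair G δ ((Z ⊓ X).part uv.1) ((Z ⊓ X).part uv.2)) ⊆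
      ((univ : Finset (V × V)).filter fun uv => ¬ RegPair G ε (Z.part uv.1) (Z.part uv.2))
        ∪ (S ×ˢ univ ∪ univ ×ˢ S) := by
    rintro ⟨u, v⟩ huv
    by_contra hcon
    simp only [mem_union, mem_product, mem_filter, mem_univ, true_and, and_true, not_or,
      not_not] at hcon huv
    refine huv ?_
    rw [part_inf_eq, part_inf_eq]
    exact hcon.1.subpair inter_subset_left inter_subset_left h1.le (by linarith)
      (hlarge u hcon.2.1) (hlarge v hcon.2.2)
  have hcard := (card_le_card hsub).trans
    ((card_union_le _ _).trans (Nat.add_le_add_left (card_union_le _ _) _))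
  rw [card_product, card_product, card_univ] at hcard
  have hcard' := (Nat.cast_le (α := ℝ)).2 hcard
  push_cast at hcard'
  rw [← hn] at hcard'
  have h3 : (S.card : ℝ) * n ≤ δ / 8 * n * n := mul_le_mul_of_nonneg_right hScard hn0.le
  have h4 : 8 * ε * n ^ 2 ≤ δ * n ^ 2 := mul_le_mul_of_nonneg_right hεδ (by positivity)
  have h5 : 0 ≤ δ * n ^ 2 := by positivity
  refine hcard'.trans ?_
  nlinarith
end

section
/- Let A, B, C be vertex subsets of a graph with C disjoint from A ∪ B, suppose the pair (A,C) is ε-regular of density d > 0 and the pair (B,C) is ε-regular of density d', and set ε' = 6ε/d. Then for all but at most ε'|A||B| pairs (a,b) ∈ A×B, the number codeg(a,b) of common neighbors of a and b in C satisfies (dd' − ε')|C| ≤ codeg(a,b) ≤ (dd' + ε')|C|. -/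
/-!
If `6ε/d ≥ 1` the bound is trivial, so assume `6ε < d ≤ 1`. In an `ε`-regular pair `(B, C)`, the
vertices of `B` whose degree into a fixed `N ⊆ C` with `|N| ≥ ε|C|` falls below
`(d(B,C) - ε)|N|` cannot make up more than an `ε` fraction of `B`, since together with `N` they
would violate regularity; likewise for the degrees above `(d(B,C) + ε)|N|`
(`RegPair.card_atypical_le`).

Applied to `(A, C)` with `N = C`, this shows that all but `2ε|A|` vertices `a ∈ A` have
`(d ± ε)|C|` neighbors in `C`. For such an `a`, the neighborhood `N` of `a` in `C` has size at
least `ε|C|`, so applied to `(B, C)` and this `N`, it shows that all but `2ε|B|` vertices `b ∈ B`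
satisfy `codeg(a,b) = (d' ± ε)|N| = (dd' ± 2ε)|C|`. Hence at most `4ε|A||B|` pairs are bad, and
`4ε ≤ 6ε/d`.
-/


open Finset
open scoped Classical

/-- `codeg G a b C` is the number of common neighbors of `a` and `b` inside `C`. -/
noncomputable def codeg {V : Type*} [Fintype V] (G : SimpleGraph V) (a b : V)
    (C : Finset V) : ℕ :=
  (C.filter fun c => G.Adj a c ∧ G.Adj b c).card

/-- The number of neighbors of `b` inside `N`. -/
noncomputable def degIn {V : Type*} (G : SimpleGraph V) (b : V) (N : Finset V) : ℕ :=
  (N.filter fun c => G.Adj b c).card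

lemma eCnt_eq_sum {V : Type*} [Fintype V] (G : SimpleGraph V) (S N : Finset V) :
    eCnt G S N = ∑ b ∈ S, degIn G b N := by
  unfold eCnt degIn
  rw [Finset.card_filter, Finset.sum_product]
  simp only [Finset.card_filter]

lemma regDens_nonneg {V : Type*} [Fintype V] (G : SimpleGraph V) (S N : Finset V) :
    0 ≤ dens G S N := by
  unfold _root_.dens; positivity

lemma regDens_le_one {V : Type*} [Fintype V] (G : SimpleGraph V) (S N : Finset V) :
    dens G S N ≤ 1 := by
  unfold _root_.dens
  apply div_le_one_of_le₀ _ (by positivity)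
  have h : eCnt G S N ≤ S.card * N.card := by
    rw [← Finset.card_product]
    exact Finset.card_filter_le _ _
  exact_mod_cast h

/-- `d(S, N)` is the average over `S` of the relative degrees into `N`. -/
lemma dens_mul_card {V : Type*} [Fintype V] (G : SimpleGraph V) {S N : Finset V}
    (hS : 0 < S.card) (hN : 0 < N.card) :
    dens G S N * N.card * S.card = ∑ b ∈ S, (degIn G b N : ℝ) := by
  have hS' : (S.card : ℝ) ≠ 0 := by positivity
  have hN' : (N.card : ℝ) ≠ 0 := by positivity
  unfold _root_.dens
  rw [eCnt_eq_sum]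
  push_cast
  field_simp

lemma RegPair.card_low_le {V : Type*} [Fintype V] {G : SimpleGraph V} {ε : ℝ} {B C : Finset V}
    (h : RegPair G ε B C) (hε : 0 < ε) {N : Finset V} (hNC : N ⊆ C) (hN : 0 < N.card)
    (hNε : ε * C.card ≤ N.card) :
    ((B.filter fun b => (degIn G b N : ℝ) < (dens G B C - ε) * N.card).card : ℝ)
      ≤ ε * B.card := by
  set S := B.filter fun b => (degIn G b N : ℝ) < (dens G B C - ε) * N.card with hSdef
  by_contra! hlt
  have hS : 0 < S.card := by
    have : (0 : ℝ) < S.card := lt_of_le_of_lt (by positivity) hlt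
    exact_mod_cast this
  have hreg := (abs_le.mp (h S (Finset.filter_subset _ _) N hNC hlt.le hNε)).2
  have hsum : ∑ b ∈ S, (degIn G b N : ℝ) < ∑ _b ∈ S, (dens G B C - ε) * N.card :=
    Finset.sum_lt_sum_of_nonempty (Finset.card_pos.mp hS)
      fun b hb => (Finset.mem_filter.mp hb).2
  rw [← dens_mul_card G hS hN, Finset.sum_const, nsmul_eq_mul, mul_comm (S.card : ℝ)] at hsum
  have h1 := lt_of_mul_lt_mul_right hsum (by positivity)
  have h2 := lt_of_mul_lt_mul_right h1 (by positivity)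
  linarith

lemma RegPair.card_high_le {V : Type*} [Fintype V] {G : SimpleGraph V} {ε : ℝ} {B C : Finset V}
    (h : RegPair G ε B C) (hε : 0 < ε) {N : Finset V} (hNC : N ⊆ C) (hN : 0 < N.card)
    (hNε : ε * C.card ≤ N.card) :
    ((B.filter fun b => (dens G B C + ε) * N.card < (degIn G b N : ℝ)).card : ℝ)
      ≤ ε * B.card := by
  set S := B.filter fun b => (dens G B C + ε) * N.card < (degIn G b N : ℝ) with hSdef
  by_contra! hlt
  have hS : 0 < S.card := by
    have : (0 : ℝ) < S.card := lt_of_le_of_lt (by positivity) hlt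
    exact_mod_cast this
  have hreg := (abs_le.mp (h S (Finset.filter_subset _ _) N hNC hlt.le hNε)).1
  have hsum : ∑ _b ∈ S, (dens G B C + ε) * N.card < ∑ b ∈ S, (degIn G b N : ℝ) :=
    Finset.sum_lt_sum_of_nonempty (Finset.card_pos.mp hS)
      fun b hb => (Finset.mem_filter.mp hb).2
  rw [← dens_mul_card G hS hN, Finset.sum_const, nsmul_eq_mul, mul_comm (S.card : ℝ)] at hsum
  have h1 := lt_of_mul_lt_mul_right hsum (by positivity)
  have h2 := lt_of_mul_lt_mul_right h1 (by positivity)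
  linarith

/-- All but `2ε|B|` vertices of `B` have the expected degree into any large subset `N` of `C`. -/
lemma RegPair.card_atypical_le {V : Type*} [Fintype V] {G : SimpleGraph V} {ε : ℝ}
    {B C : Finset V} (h : RegPair G ε B C) (hε : 0 < ε) {N : Finset V} (hNC : N ⊆ C)
    (hN : 0 < N.card) (hNε : ε * C.card ≤ N.card) :
    ((B.filter fun b => ¬ ((dens G B C - ε) * N.card ≤ (degIn G b N : ℝ) ∧
        (degIn G b N : ℝ) ≤ (dens G B C + ε) * N.card)).card : ℝ) ≤ 2 * ε * B.card := by
  have h1 := h.card_low_le hε hNC hN hNε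
  have h2 := h.card_high_le hε hNC hN hNε
  have h3 : (B.filter fun b => ¬ ((dens G B C - ε) * N.card ≤ (degIn G b N : ℝ) ∧
        (degIn G b N : ℝ) ≤ (dens G B C + ε) * N.card)) ⊆
      (B.filter fun b => (degIn G b N : ℝ) < (dens G B C - ε) * N.card) ∪
      (B.filter fun b => (dens G B C + ε) * N.card < (degIn G b N : ℝ)) := by
    intro b hb
    simp only [Finset.mem_filter, Finset.mem_union, not_and_or, not_le] at hb ⊢
    tauto
  have h4 := (Finset.card_le_card h3).trans (Finset.card_union_le _ _)
  have h5 : ((B.filter fun b => ¬ ((dens G B C - ε) * N.card ≤ (degIn G b N : ℝ) ∧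
        (degIn G b N : ℝ) ≤ (dens G B C + ε) * N.card)).card : ℝ) ≤
      ((B.filter fun b => (degIn G b N : ℝ) < (dens G B C - ε) * N.card).card : ℝ) +
      ((B.filter fun b => (dens G B C + ε) * N.card < (degIn G b N : ℝ)).card : ℝ) := by
    exact_mod_cast h4
  linarith

lemma codeg_eq_degIn {V : Type*} [Fintype V] (G : SimpleGraph V) (a b : V) (C : Finset V) :
    codeg G a b C = degIn G b (C.filter fun c => G.Adj a c) := by
  unfold codeg degIn
  rw [Finset.filter_filter]

/-- **The codegree property of regular pairs (Fact 4.4).**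
If `(A,C)` is `ε`-regular of density `d > 0` and `(B,C)` is `ε`-regular of density `d'`,
then, setting `ε' = 6ε/d`, all pairs `(a,b) ∈ A × B` but at most `ε'|A||B|` satisfy
`codeg(a,b) = (dd' ± ε')|C|`. -/
theorem codegree_of_regular {V : Type*} [Fintype V] [DecidableEq V] (G : SimpleGraph V)
    (A B C : Finset V) (hC : Disjoint C (A ∪ B))
    (ε d d' : ℝ) (hε : 0 < ε) (hd : 0 < d)
    (hACd : dens G A C = d) (hAC : RegPair G ε A C)
    (hBCd : dens G B C = d') (hBC : RegPair G ε B C) :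
    (((A ×ˢ B).filter fun ab =>
        ¬ ((d * d' - 6 * ε / d) * C.card ≤ (codeg G ab.1 ab.2 C : ℝ) ∧
           (codeg G ab.1 ab.2 C : ℝ) ≤ (d * d' + 6 * ε / d) * C.card)).card : ℝ) ≤
      (6 * ε / d) * ((A.card : ℝ) * B.card) := by
  have hd1 : d ≤ 1 := hACd ▸ regDens_le_one G A C
  have hd'0 : 0 ≤ d' := hBCd ▸ regDens_nonneg G B C
  have hd'1 : d' ≤ 1 := hBCd ▸ regDens_le_one G B C
  have hε' : 6 * ε ≤ 6 * ε / d := le_div_self (by positivity) hd hd1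
  -- The trivial case, where `ε' = 6ε/d` is at least `1`.
  rcases le_or_gt 1 (6 * ε / d) with hbig | hsmall
  · have h1 : (((A ×ˢ B).filter fun ab =>
        ¬ ((d * d' - 6 * ε / d) * C.card ≤ (codeg G ab.1 ab.2 C : ℝ) ∧
           (codeg G ab.1 ab.2 C : ℝ) ≤ (d * d' + 6 * ε / d) * C.card)).card : ℝ) ≤
        (A.card : ℝ) * B.card := by
      have := Finset.card_filter_le (A ×ˢ B) fun ab =>
        ¬ ((d * d' - 6 * ε / d) * C.card ≤ (codeg G ab.1 ab.2 C : ℝ) ∧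
           (codeg G ab.1 ab.2 C : ℝ) ≤ (d * d' + 6 * ε / d) * C.card)
      rw [Finset.card_product] at this
      exact_mod_cast this
    exact h1.trans (le_mul_of_one_le_left (by positivity) hbig)
  have hεd : 6 * ε < d := by rwa [div_lt_one hd] at hsmall
  -- With the convention `x / 0 = 0`, positive density forces `C` to be nonempty.
  have hCpos : 0 < C.card := by
    rw [Nat.pos_iff_ne_zero]
    intro h0
    rw [_root_.dens, h0] at hACd
    simp at hACd
    linarith
  have hCpos' : (0 : ℝ) < C.card := by exact_mod_cast hCpos
  generalize 6 * ε / d = ε' at *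
  set typ : V → Prop := fun a => (d - ε) * C.card ≤ (degIn G a C : ℝ) ∧
    (degIn G a C : ℝ) ≤ (d + ε) * C.card with htyp
  have hA : ((A.filter fun a => ¬ typ a).card : ℝ) ≤ 2 * ε * A.card := by
    have := hAC.card_atypical_le hε (Finset.Subset.refl C) hCpos (by nlinarith)
    rwa [hACd] at this
  have hB : ∀ a, typ a → ((B.filter fun b =>
      ¬ ((d * d' - ε') * C.card ≤ (codeg G a b C : ℝ) ∧
         (codeg G a b C : ℝ) ≤ (d * d' + ε') * C.card)).card : ℝ) ≤ 2 * ε * B.card := by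
    rintro a ⟨hlo, hhi⟩
    set N := C.filter fun c => G.Adj a c with hNdef
    have hdeg : degIn G a C = N.card := rfl
    rw [hdeg] at hlo hhi
    have hNC : N ⊆ C := Finset.filter_subset _ _
    have hNle : (N.card : ℝ) ≤ C.card := by exact_mod_cast Finset.card_le_card hNC
    have hNε : ε * C.card ≤ N.card := by nlinarith
    have hNpos : 0 < N.card := by
      have : (0 : ℝ) < N.card := lt_of_lt_of_le (by positivity) hNε
      exact_mod_cast this
    refine le_trans ?_ (hBC.card_atypical_le hε hNC hNpos hNε)
    rw [hBCd]
    norm_cast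
    refine Finset.card_le_card (Finset.monotone_filter_right B ?_)
    intro b _ hb hgood
    refine hb ?_
    rw [codeg_eq_degIn]
    obtain ⟨h1, h2⟩ := hgood
    -- `d'|N| = (dd' ± d'ε)|C|` and `ε|N| ≤ ε|C|`, so the total error is at most `2ε|C|`.
    have e1 : d' * ((d - ε) * C.card) ≤ d' * N.card := mul_le_mul_of_nonneg_left hlo hd'0
    have e2 : d' * N.card ≤ d' * ((d + ε) * C.card) := mul_le_mul_of_nonneg_left hhi hd'0
    have e3 : ε * N.card ≤ ε * C.card := mul_le_mul_of_nonneg_left hNle hε.le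
    have e4 : d' * (ε * C.card) ≤ 1 * (ε * C.card) :=
      mul_le_mul_of_nonneg_right hd'1 (by positivity)
    have e5 : 6 * ε * C.card ≤ ε' * C.card := mul_le_mul_of_nonneg_right hε' hCpos'.le
    have e6 : 0 < ε * C.card := by positivity
    constructor
    · refine le_trans ?_ h1
      linarith
    · refine h2.trans ?_
      linarith
  have hcount : (((A ×ˢ B).filter fun ab =>
        ¬ ((d * d' - ε') * C.card ≤ (codeg G ab.1 ab.2 C : ℝ) ∧
           (codeg G ab.1 ab.2 C : ℝ) ≤ (d * d' + ε') * C.card)).card : ℝ) =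
      ∑ a ∈ A, ((B.filter fun b => ¬ ((d * d' - ε') * C.card ≤ (codeg G a b C : ℝ) ∧
         (codeg G a b C : ℝ) ≤ (d * d' + ε') * C.card)).card : ℝ) := by
    rw [Finset.card_filter, Finset.sum_product]
    simp only [Finset.card_filter]
    push_cast
    rfl
  rw [hcount]
  calc _ ≤ ∑ a ∈ A, (2 * ε * B.card + if ¬ typ a then (B.card : ℝ) else 0) := by
        refine Finset.sum_le_sum fun a _ => ?_
        by_cases ha : typ a
        · simpa only [ha, not_true_eq_false, if_false, add_zero] using hB a ha
        · rw [if_pos ha]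
          have h1 : ((B.filter fun b =>
              ¬ ((d * d' - ε') * C.card ≤ (codeg G a b C : ℝ) ∧
                (codeg G a b C : ℝ) ≤ (d * d' + ε') * C.card)).card : ℝ) ≤ B.card := by
            exact_mod_cast Finset.card_filter_le _ _
          have h2 : 0 ≤ 2 * ε * B.card := by positivity
          linarith
    _ = A.card * (2 * ε * B.card) + (A.filter fun a => ¬ typ a).card * B.card := by
        rw [Finset.sum_add_distrib, Finset.sum_const, ← Finset.sum_filter, Finset.sum_const,
          nsmul_eq_mul, nsmul_eq_mul]
    _ ≤ A.card * (2 * ε * B.card) + 2 * ε * A.card * B.card := by gcongr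
    _ = 4 * ε * (A.card * B.card) := by ring
    _ ≤ ε' * (A.card * B.card) := by
        gcongr
        linarith
end
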